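/- arXiv:math/0510230 — 2 statements merged into one kernel-verified Lean document; each statement's English description precedes it below -/
import Mathlib

section
/- Let F be a free group on a nonempty finite set X and let Φ be a monoid automorphism of End(F) such that Φ(ν) = s ∘ ν ∘ s⁻¹ for a bijection s of F. Then s(g⁻¹) = (s(g))⁻¹ for all g ∈ F, and s(1) = 1. -/
/-!
Transport inversion along `s` to the involution `σ g = s⁻¹ ((s g)⁻¹)`. Homomorphisms commute with
inversion, so `σ` commutes with every endomorphism of the free group. The endomorphism collapsing
all generators to `x` forces `σ x = x ^ k`, and the endomorphisms sending `x` to an arbitrary `g`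
spread this to `σ g = g ^ k`. Since `σ` is an involution, `k = ±1`. If `k = 1`, every `s g` is its
own inverse, hence trivial by torsion-freeness; `k = -1` says that `s` commutes with inversion.
-/

open Function

section CommutesWithEndomorphisms

variable {X : Type*} {σ : FreeGroup X → FreeGroup X}

theorem lift_const_mem_zpowers {G : Type*} [Group G] (a : G) (w : FreeGroup X) :
    FreeGroup.lift (fun _ ↦ a) w ∈ Subgroup.zpowers a :=
  FreeGroup.range_lift_le (by rintro _ ⟨_, rfl⟩; exact Subgroup.mem_zpowers a) ⟨w, rfl⟩

theorem exists_forall_eq_zpow_of_commute_end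
    (hσ : ∀ ν : Monoid.End (FreeGroup X), Function.Commute σ ν) :
    ∃ k : ℤ, ∀ g, σ g = g ^ k := by
  rcases isEmpty_or_nonempty X with _ | ⟨⟨x⟩⟩
  · exact ⟨0, fun _ ↦ Subsingleton.elim _ _⟩
  let collapse (g : FreeGroup X) : Monoid.End (FreeGroup X) := FreeGroup.lift fun _ ↦ g
  have collapse_of (g : FreeGroup X) : collapse g (.of x) = g := FreeGroup.lift_apply_of
  have σ_eq (g : FreeGroup X) : σ g = collapse g (σ (.of x)) := by
    rw [← hσ (collapse g), collapse_of]
  obtain ⟨k, hk⟩ : σ (.of x) ∈ Subgroup.zpowers (.of x) := by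
    rw [σ_eq]
    exact lift_const_mem_zpowers _ _
  refine ⟨k, fun g ↦ ?_⟩
  calc σ g = collapse g (.of x ^ k) := by rw [σ_eq, ← hk]
    _ = g ^ k := by rw [map_zpow, collapse_of]

theorem eq_id_or_eq_inv_of_involutive_of_commute_end (hinv : Involutive σ)
    (hσ : ∀ ν : Monoid.End (FreeGroup X), Function.Commute σ ν) :
    σ = id ∨ σ = Inv.inv := by
  rcases isEmpty_or_nonempty X with _ | ⟨⟨x⟩⟩
  · exact Or.inl (Subsingleton.elim _ _)
  obtain ⟨k, hk⟩ := exists_forall_eq_zpow_of_commute_end hσ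
  have zpow_sq : FreeGroup.of x ^ (k * k - 1) = 1 := by
    rw [zpow_sub_one, zpow_mul, ← hk, ← hk, hinv, mul_inv_cancel]
  have k_sq : k * k = 1 :=
    sub_eq_zero.mp ((IsMulTorsionFree.zpow_eq_one_iff_right (FreeGroup.of_ne_one x)).mp zpow_sq)
  refine (Int.eq_one_or_neg_one_of_mul_eq_one k_sq).imp ?_ ?_
  · rintro rfl
    exact funext fun g ↦ (hk g).trans (zpow_one g)
  · rintro rfl
    exact funext fun g ↦ (hk g).trans (zpow_neg_one g)

end CommutesWithEndomorphisms

section TransportedInv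

variable {α G : Type*} [Group G] (s : α ≃ G)

/-- The inversion of the group `G`, transported to a type `α` along a bijection `s : α ≃ G`. When
`α` is itself a group, comparing it with the inversion of `α` measures how far `s` is from
commuting with inversion. -/
def transportedInv (a : α) : α :=
  s.symm (s a)⁻¹

theorem apply_transportedInv (a : α) : s (transportedInv s a) = (s a)⁻¹ :=
  s.apply_symm_apply _

theorem transportedInv_involutive : Involutive (transportedInv s) := fun a ↦
  s.injective (by simp only [apply_transportedInv, inv_inv])

variable {s}

theorem transportedInv_commute_of_semiconj {ν : α → α} {μ : Monoid.End G} (h : Semiconj s ν μ) :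
    Function.Commute (transportedInv s) ν := fun a ↦
  s.injective (by rw [apply_transportedInv, h, h, apply_transportedInv, map_inv])

end TransportedInv

theorem main_permutation_preserves_inv_and_one_general {X G : Type*} [Group G] [IsMulTorsionFree G]
    (s : FreeGroup X ≃ G)
    (hs : ∀ ν : Monoid.End (FreeGroup X), ∃ μ : Monoid.End G, Semiconj s ν μ) :
    (∀ g : FreeGroup X, s g⁻¹ = (s g)⁻¹) ∧ s 1 = 1 := by
  have commute_end (ν : Monoid.End (FreeGroup X)) : Function.Commute (transportedInv s) ν :=
    let ⟨_, hμ⟩ := hs ν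
    transportedInv_commute_of_semiconj hμ
  have map_inv_eq (g : FreeGroup X) : s g⁻¹ = (s g)⁻¹ := by
    rcases eq_id_or_eq_inv_of_involutive_of_commute_end (transportedInv_involutive s) commute_end
      with h_id | h_inv
    · have s_eq_one (w : FreeGroup X) : s w = 1 := by
        rw [← inv_eq_self, ← apply_transportedInv, h_id, id]
      rw [s_eq_one, s_eq_one, inv_one]
    · rw [← apply_transportedInv, h_inv]
  refine ⟨map_inv_eq, ?_⟩
  rw [← inv_eq_self, ← map_inv_eq, inv_one]

/-- Let `F` be a free group on a nonempty finite set `X`, and let `Φ` be a monoid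
automorphism of `End(F)` given by conjugation by a bijection `s` of `F`.  Then `s`
commutes with inversion and fixes the identity element. -/
theorem main_permutation_preserves_inv_and_one (X : Type*) [Fintype X] [Nonempty X]
    (s : FreeGroup X ≃ FreeGroup X)
    (Φ : Monoid.End (FreeGroup X) ≃* Monoid.End (FreeGroup X))
    (hΦ : ∀ ν : Monoid.End (FreeGroup X),
      ((Φ ν : Monoid.End (FreeGroup X)) : FreeGroup X → FreeGroup X) =
        (s : FreeGroup X → FreeGroup X) ∘ ν ∘ (s.symm : FreeGroup X → FreeGroup X)) :
    (∀ g : FreeGroup X, s g⁻¹ = (s g)⁻¹) ∧ s 1 = 1 := by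
  exact main_permutation_preserves_inv_and_one_general s fun ν ↦
    ⟨Φ ν, fun g ↦ by rw [hΦ, comp_apply, comp_apply, s.symm_apply_apply]⟩
end

section
/- In a free group F on generators x, y, suppose w(x,y) is a word in x, y (an element of the free group on {x,y}) such that the binary operation a • b := w(a,b) satisfies a • 1 = a, 1 • b = b, and (a • b)⁻¹ = b⁻¹ • a⁻¹ for all a, b ∈ F. If moreover substituting the old product into w expressed via • recovers ab, then w(x,y) = xy or w(x,y) = yx. -/
/-!
Since `a • 1 = a`, evaluating `x^{i₁} • y^{j₁} • ⋯ = xy` ends with a step `u • g = xy` in which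
`g ≠ 1` is a power of a generator. Let `z` be the other generator. As `∂g/∂z = 0`, the chain rule
of the Fox calculus turns `∂/∂z` of this equation into `(∂w/∂x)(u, g) * ∂u/∂z = 1` or `= x`. Free
groups have unique products, so `ℤ[F]` is a domain with only trivial units, and `(∂w/∂x)(u, g)` is
a single monomial. The Jacobian of the substitution `x ↦ u, y ↦ g` is triangular and nonsingular,
which forces the substitution to be injective, so `∂w/∂x` is itself a single monomial. But `∂w/∂x`
has exactly one monomial for each letter `x^{±1}` of the reduced word of `w`: there is just one such
letter. By the inversion law, exchanging `x` and `y` reverses the reduced word of `w`, so `y` occurs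
once as well, with the same exponent, and `a • 1 = a` shows that this exponent is `1`.
-/

open scoped Finset MonoidAlgebra

/-- A group is locally indicable if each of its nontrivial finitely generated subgroups surjects
onto an infinite cyclic group. A nontrivial homomorphism to `ℤ` is enough, since its image is again
infinite cyclic. -/
def LocallyIndicable (G : Type*) [Group G] : Prop :=
  ∀ H : Subgroup G, H.FG → H ≠ ⊥ → ∃ φ : H →* Multiplicative ℤ, φ ≠ 1

section UniqueProducts

variable {G : Type*}

theorem uniqueMul_of_uniqueMul_filter_max [Mul G] {A B : Finset G} {α β : G → ℤ} {a b x₀ y₀ : G}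
    (hadd : ∀ x ∈ A, ∀ y ∈ B, ∀ x' ∈ A, ∀ y' ∈ B, x * y = x' * y' → α x + β y = α x' + β y')
    (ha : ∀ x ∈ A, α x ≤ α a) (hb : ∀ y ∈ B, β y ≤ β b)
    (hx₀ : x₀ ∈ A.filter (α · = α a)) (hy₀ : y₀ ∈ B.filter (β · = β b))
    (h : UniqueMul (A.filter (α · = α a)) (B.filter (β · = β b)) x₀ y₀) :
    UniqueMul A B x₀ y₀ := by
  intro x y hx hy hxy
  rw [Finset.mem_filter] at hx₀ hy₀
  have hsum := hadd x hx y hy x₀ hx₀.1 y₀ hy₀.1 hxy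
  have hxa := ha x hx
  have hyb := hb y hy
  exact h (Finset.mem_filter.2 ⟨hx, by lia⟩) (Finset.mem_filter.2 ⟨hy, by lia⟩) hxy

variable [Group G]

theorem LocallyIndicable.exists_additive_on_closure (hG : LocallyIndicable G) {S : Finset G} {s : G}
    (hs : s ∈ S) (hs_one : s ≠ 1) :
    ∃ ψ : G → ℤ,
      (∀ g ∈ Subgroup.closure (S : Set G), ∀ h ∈ Subgroup.closure (S : Set G),
        ψ (g * h) = ψ g + ψ h) ∧
      ∃ g ∈ S, ψ g ≠ 0 := by
  classical
  have hne : Subgroup.closure (S : Set G) ≠ ⊥ := fun h =>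
    hs_one (Subgroup.closure_eq_bot_iff.1 h hs)
  obtain ⟨φ, hφ⟩ := hG _ ⟨S, rfl⟩ hne
  refine ⟨fun g => if h : g ∈ Subgroup.closure (S : Set G) then (φ ⟨g, h⟩).toAdd else 0,
    fun g hg h hh => ?_, ?_⟩
  · simp only [dif_pos hg, dif_pos hh, dif_pos (mul_mem hg hh), ← toAdd_mul, ← map_mul,
      MulMemClass.mk_mul_mk]
  · contrapose! hφ
    refine MonoidHom.eq_of_eqOn_dense Subgroup.closure_closure_coe_preimage fun g hg => ?_
    simpa using hφ g hg

theorem LocallyIndicable.exists_additive_pair (hG : LocallyIndicable G) {A B : Finset G}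
    (hA : A.Nonempty) (hB : B.Nonempty) (hcard : ¬ (#A ≤ 1 ∧ #B ≤ 1)) :
    ∃ α β : G → ℤ,
      (∀ x ∈ A, ∀ y ∈ B, ∀ x' ∈ A, ∀ y' ∈ B, x * y = x' * y' → α x + β y = α x' + β y') ∧
      ((∃ x ∈ A, ∃ x' ∈ A, α x ≠ α x') ∨ ∃ y ∈ B, ∃ y' ∈ B, β y ≠ β y') := by
  classical
  obtain ⟨a, ha⟩ := hA
  obtain ⟨b, hb⟩ := hB
  -- After translation both sets contain `1`, so `S` is nontrivial if one of them has two elements.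
  let S : Finset G := A.image (a⁻¹ * ·) ∪ B.image (· * b⁻¹)
  have hAS (x) (hx : x ∈ A) : a⁻¹ * x ∈ S :=
    Finset.mem_union_left _ (Finset.mem_image_of_mem _ hx)
  have hBS (y) (hy : y ∈ B) : y * b⁻¹ ∈ S :=
    Finset.mem_union_right _ (Finset.mem_image_of_mem (· * b⁻¹) hy)
  have hS : ∃ s ∈ S, s ≠ 1 := by
    contrapose! hcard
    exact ⟨Finset.card_le_one_iff_subset_singleton.2 ⟨a, fun x hx =>
        Finset.mem_singleton.2 (inv_mul_eq_one.1 (hcard _ (hAS x hx))).symm⟩,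
      Finset.card_le_one_iff_subset_singleton.2 ⟨b, fun y hy =>
        Finset.mem_singleton.2 (mul_inv_eq_one.1 (hcard _ (hBS y hy)))⟩⟩
  obtain ⟨s, hs, hs_one⟩ := hS
  obtain ⟨ψ, hψ, g, hg, hψg⟩ := hG.exists_additive_on_closure hs hs_one
  have hψ_one : ψ 1 = 0 := by simpa using hψ 1 (one_mem _) 1 (one_mem _)
  refine ⟨fun x => ψ (a⁻¹ * x), fun y => ψ (y * b⁻¹), fun x hx y hy x' hx' y' hy' hxy => ?_, ?_⟩
  · have hψ_mul (x) (hx : x ∈ A) (y) (hy : y ∈ B) :=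
      hψ _ (Subgroup.subset_closure (hAS x hx)) _ (Subgroup.subset_closure (hBS y hy))
    rw [← hψ_mul x hx y hy, ← hψ_mul x' hx' y' hy']
    rw [mul_assoc, ← mul_assoc x, hxy, mul_assoc x', ← mul_assoc a⁻¹]
  · rcases Finset.mem_union.1 hg with hg | hg <;> obtain ⟨x, hx, rfl⟩ := Finset.mem_image.1 hg
    · exact Or.inl ⟨x, hx, a, ha, by simpa [hψ_one] using hψg⟩
    · exact Or.inr ⟨x, hx, b, hb, by simpa [hψ_one] using hψg⟩

theorem LocallyIndicable.uniqueProds (hG : LocallyIndicable G) : UniqueProds G where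
  uniqueMul_of_nonempty {A B} hA hB := by
    induction hn : #A + #B using Nat.strong_induction_on generalizing A B with
    | _ n ih =>
    subst hn
    by_cases hcard : #A ≤ 1 ∧ #B ≤ 1
    · exact UniqueMul.of_card_le_one hA hB hcard.1 hcard.2
    obtain ⟨α, β, hadd, hne⟩ := hG.exists_additive_pair hA hB hcard
    obtain ⟨a, ha, ha_max⟩ := A.exists_max_image α hA
    obtain ⟨b, hb, hb_max⟩ := B.exists_max_image β hB
    have hlt : #(A.filter (α · = α a)) + #(B.filter (β · = β b)) < #A + #B := by
      have hAle := A.card_filter_le (α · = α a)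
      have hBle := B.card_filter_le (β · = β b)
      by_contra! hge
      have hAeq := Finset.card_filter_eq_iff.1 (hAle.antisymm (by lia))
      have hBeq := Finset.card_filter_eq_iff.1 (hBle.antisymm (by lia))
      rcases hne with ⟨x, hx, x', hx', hne⟩ | ⟨y, hy, y', hy', hne⟩
      · exact hne ((hAeq x hx).trans (hAeq x' hx').symm)
      · exact hne ((hBeq y hy).trans (hBeq y' hy').symm)
    obtain ⟨x, hx, y, hy, hxy⟩ := ih _ hlt ⟨a, by simp [ha]⟩ ⟨b, by simp [hb]⟩ rfl
    exact ⟨x, Finset.mem_of_mem_filter x hx, y, Finset.mem_of_mem_filter y hy,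
      uniqueMul_of_uniqueMul_filter_max hadd ha_max hb_max hx hy hxy⟩

theorem locallyIndicable_of_isFreeGroup [IsFreeGroup G] : LocallyIndicable G := by
  intro H _ hH
  have : Nontrivial H := H.nontrivial_iff_ne_bot.2 hH
  -- `H` is itself free by the Nielsen–Schreier theorem.
  have : Nonempty (IsFreeGroup.Generators H) := by
    by_contra! hempty
    exact not_subsingleton H (IsFreeGroup.toFreeGroup H).injective.subsingleton
  obtain ⟨s⟩ := this
  refine ⟨IsFreeGroup.lift fun _ => Multiplicative.ofAdd 1, fun h => ?_⟩
  simpa [IsFreeGroup.lift_of] using DFunLike.congr_fun h (IsFreeGroup.of s)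

instance twoUniqueProds_freeGroup {α : Type*} : TwoUniqueProds (FreeGroup α) :=
  have := (locallyIndicable_of_isFreeGroup (G := FreeGroup α)).uniqueProds
  UniqueProds.toTwoUniqueProds_of_group

end UniqueProducts

theorem card_support_eq_one_of_mul_eq_single {R G : Type*} [Semiring R] [NoZeroDivisors R] [Mul G]
    [TwoUniqueProds G] {p q : R[G]} {g : G} {r : R} (hr : r ≠ 0)
    (h : p * q = MonoidAlgebra.single g r) : #p.coeff.support = 1 := by
  have hunique {x y : G} (hx : x ∈ p.coeff.support) (hy : y ∈ q.coeff.support)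
      (hxy : UniqueMul p.coeff.support q.coeff.support x y) : x * y = g := by
    have hcoeff := MonoidAlgebra.coeff_mul_mul_of_uniqueMul hxy
    rw [h] at hcoeff
    by_contra hne
    rw [MonoidAlgebra.coeff_single, Finsupp.single_eq_of_ne hne, eq_comm, mul_eq_zero] at hcoeff
    simp_all
  have hne : p * q ≠ 0 := by simpa [h] using hr
  have hp : 0 < #p.coeff.support := by
    simpa [Finset.card_pos] using left_ne_zero_of_mul hne
  have hq : 0 < #q.coeff.support := by
    simpa [Finset.card_pos] using right_ne_zero_of_mul hne
  by_contra hcard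
  obtain ⟨⟨x, y⟩, hxy, ⟨x', y'⟩, hxy', hdistinct, hu, hu'⟩ :=
    TwoUniqueProds.uniqueMul_of_one_lt_card
      (Nat.one_lt_mul_iff.2 ⟨hp, hq, Or.inl (by lia)⟩)
  rw [Finset.mem_product] at hxy hxy'
  have hprod := (hunique hxy.1 hxy.2 hu).trans (hunique hxy'.1 hxy'.2 hu').symm
  exact hdistinct (Prod.ext_iff.2 (hu' hxy.1 hxy.2 hprod))

noncomputable section FoxCalculus

open FreeGroup hiding map_mul map_inv map_one
open MonoidAlgebra hiding of

section Derivative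

variable {α β : Type*} [DecidableEq α] [DecidableEq β]

/-- The Fox derivative with respect to `a`, on words that need not be reduced. -/
def foxDerivWord (a : α) : List (α × Bool) → ℤ[FreeGroup α]
  | [] => 0
  | (b, e) :: l =>
    (if b = a then bif e then 1 else -single (of b)⁻¹ 1 else 0) +
      single (mk [(b, e)]) 1 * foxDerivWord a l

theorem foxDerivWord_append (a : α) (l m : List (α × Bool)) :
    foxDerivWord a (l ++ m) = foxDerivWord a l + single (mk l) 1 * foxDerivWord a m := by
  induction l with
  | nil => simp [foxDerivWord, ← one_eq_mk, ← one_def]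
  | cons s l ih =>
    rw [List.cons_append, foxDerivWord, foxDerivWord, ih, mul_add, ← mul_assoc, single_mul_single,
      mul_mk, mul_one, add_assoc, List.singleton_append]

theorem foxDerivWord_cancel (a b : α) (e : Bool) : foxDerivWord a [(b, e), (b, !e)] = 0 := by
  have hinv (b : α) : mk [(b, false)] = (of b)⁻¹ := rfl
  have hof (b : α) : mk [(b, true)] = of b := rfl
  cases e <;> by_cases h : b = a <;>
    simp [foxDerivWord, h, hinv, hof, single_mul_single, one_def]

/-- The Fox derivative `∂w/∂a` in the integral group ring: the crossed homomorphism, for the left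
regular action, that sends the generator `a` to `1` and every other generator to `0`. -/
def foxDeriv (a : α) : FreeGroup α → ℤ[FreeGroup α] :=
  Quot.lift (foxDerivWord a) fun _ _ h => by
    obtain @⟨l, m, b, e⟩ := h
    have hone : (mk [(b, e), (b, !e)] : FreeGroup α) = 1 :=
      Quot.sound (Red.Step.not (L₁ := []) (L₂ := []))
    change foxDerivWord a (l ++ ([(b, e), (b, !e)] ++ m)) = _
    rw [foxDerivWord_append, foxDerivWord_append a _ m, foxDerivWord_append a l m,
      foxDerivWord_cancel, hone, ← one_def, one_mul, zero_add]

theorem foxDeriv_one (a : α) : foxDeriv a 1 = 0 := rfl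

theorem foxDeriv_of (a b : α) : foxDeriv a (of b) = if b = a then 1 else 0 := by
  change foxDerivWord a [(b, true)] = _
  simp [foxDerivWord]

theorem foxDeriv_mul (a : α) (v w : FreeGroup α) :
    foxDeriv a (v * w) = foxDeriv a v + single v 1 * foxDeriv a w := by
  rcases v with ⟨l⟩
  rcases w with ⟨m⟩
  exact foxDerivWord_append a l m

theorem foxDeriv_inv (a : α) (w : FreeGroup α) :
    foxDeriv a w⁻¹ = -(single w⁻¹ 1 * foxDeriv a w) := by
  rw [eq_neg_iff_add_eq_zero, ← foxDeriv_mul, inv_mul_cancel, foxDeriv_one]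

theorem foxDeriv_of_zpow_of_ne {a b : α} (hab : b ≠ a) (n : ℤ) : foxDeriv a (of b ^ n) = 0 := by
  induction n with
  | zero => rw [zpow_zero, foxDeriv_one]
  | succ n ih => rw [zpow_add_one, foxDeriv_mul, ih, foxDeriv_of, if_neg hab, mul_zero, add_zero]
  | pred n ih =>
    rw [zpow_sub_one, foxDeriv_mul, ih, foxDeriv_inv, foxDeriv_of, if_neg hab, mul_zero, neg_zero,
      mul_zero, add_zero]

theorem foxDeriv_map [Fintype α] (f : FreeGroup α →* FreeGroup β) (b : β) (w : FreeGroup α) :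
    foxDeriv b (f w) = ∑ a, mapDomainRingHom ℤ f (foxDeriv a w) * foxDeriv b (f (of a)) := by
  induction w using FreeGroup.induction_on with
  | C1 => simp [foxDeriv_one]
  | of a =>
    simp only [foxDeriv_of, apply_ite (mapDomainRingHom ℤ f), map_one, map_zero, ite_mul, one_mul,
      zero_mul, Finset.sum_ite_eq, Finset.mem_univ, if_true]
  | inv_of a ih =>
    simp only [map_inv, foxDeriv_inv, ih, map_neg, map_mul, mapDomainRingHom_apply,
      mapDomain_single, neg_mul, mul_assoc, Finset.sum_neg_distrib, Finset.mul_sum]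
  | mul v w hv hw =>
    simp only [map_mul, foxDeriv_mul, hv, hw, map_add, mapDomainRingHom_apply, mapDomain_single,
      add_mul, mul_assoc, Finset.sum_add_distrib, Finset.mul_sum]

theorem foxDeriv_mk_append_singleton (a b : α) (e : Bool) (l : List (α × Bool)) :
    foxDeriv a (mk (l ++ [(b, e)])) = foxDeriv a (mk l) + if b = a then
      single (mk (bif e then l else l ++ [(b, e)])) (bif e then 1 else -1) else 0 := by
  have hword : foxDerivWord a [(b, e)] =
      if b = a then bif e then 1 else -single (of b)⁻¹ 1 else 0 := by simp [foxDerivWord]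
  have hinv : (of b)⁻¹ = mk [(b, false)] := rfl
  rw [← mul_mk, foxDeriv_mul]
  change _ + _ * foxDerivWord a [(b, e)] = _
  rw [hword]
  split_ifs <;> cases e <;> simp [hinv, single_mul_single, mul_mk, single_neg]

theorem prefix_of_mem_support_foxDeriv_mk {a : α} {v : FreeGroup α} {l : List (α × Bool)}
    (hl : IsReduced l) (hv : v ∈ (foxDeriv a (mk l)).coeff.support) :
    v.toWord ++ [(a, true)] <+: l ∨ v.toWord <+: l ∧ [(a, false)] <:+ v.toWord := by
  induction l using List.reverseRecOn with
  | nil => simp [← one_eq_mk, foxDeriv_one] at hv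
  | append_singleton l s ih =>
    obtain ⟨b, e⟩ := s
    have hl' : IsReduced l := List.IsChain.left_of_append hl
    rw [foxDeriv_mk_append_singleton, coeff_add] at hv
    rcases Finset.mem_union.1 (Finsupp.support_add hv) with hv | hv
    · exact (ih hl' hv).imp (·.trans (List.prefix_append _ _))
        (.imp_left (·.trans (List.prefix_append _ _)))
    · split_ifs at hv with hba
      · obtain rfl := Finset.mem_singleton.1 (Finsupp.support_single_subset hv)
        subst hba
        cases e
        · simp [toWord_mk, hl.reduce_eq]
        · simp [toWord_mk, hl'.reduce_eq]
      · simp at hv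

theorem card_support_foxDeriv_mk (a : α) {l : List (α × Bool)} (hl : IsReduced l) :
    #(foxDeriv a (mk l)).coeff.support = l.countP (·.1 = a) := by
  induction l using List.reverseRecOn with
  | nil => simp [← one_eq_mk, foxDeriv_one]
  | append_singleton l s ih =>
    obtain ⟨b, e⟩ := s
    have hl' : IsReduced l := List.IsChain.left_of_append hl
    rw [foxDeriv_mk_append_singleton, List.countP_append, ← ih hl']
    split_ifs with hba
    · subst hba
      have hnew : mk (bif e then l else l ++ [(b, e)]) ∉ (foxDeriv b (mk l)).coeff.support := by
        intro hmem
        have hpre := prefix_of_mem_support_foxDeriv_mk hl' hmem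
        cases e
        · rw [cond_false, toWord_mk, hl.reduce_eq] at hpre
          rcases hpre with hpre | ⟨hpre, -⟩ <;> simpa using hpre.length_le
        · rw [cond_true, toWord_mk, hl'.reduce_eq] at hpre
          rcases hpre with hpre | ⟨-, m, rfl⟩
          · simpa using hpre.length_le
          · have hcancel : IsReduced [(b, false), (b, true)] :=
              List.IsChain.right_of_append (List.append_assoc m _ _ ▸ hl)
            simp [FreeGroup.IsReduced] at hcancel
      rw [coeff_add, coeff_single, Finsupp.support_add_single hnew (by cases e <;> decide),
        Finset.card_cons]
      simp
    · simp [hba]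

theorem foxDeriv_ne_zero_of_mem_toWord {a : α} {e : Bool} {w : FreeGroup α}
    (h : (a, e) ∈ w.toWord) : foxDeriv a w ≠ 0 := by
  intro hzero
  have hcard := card_support_foxDeriv_mk a w.isReduced_toWord
  rw [mk_toWord, hzero] at hcard
  exact List.countP_eq_zero.1 hcard.symm (a, e) h (by simp)

theorem exists_foxDeriv_ne_zero {w : FreeGroup α} (hw : w ≠ 1) : ∃ a, foxDeriv a w ≠ 0 := by
  obtain ⟨s, hs⟩ := List.exists_mem_of_ne_nil _ (mt toWord_eq_nil_iff.1 hw)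
  exact ⟨s.1, foxDeriv_ne_zero_of_mem_toWord hs⟩

end Derivative

section Injectivity

theorem exists_ne_map_eq_of_mapDomain_eq_zero {R G H : Type*} [Semiring R] {f : G → H} {p : R[G]}
    (hp : p ≠ 0) (h : mapDomain f p = 0) :
    ∃ v ∈ p.coeff.support, ∃ v' ∈ p.coeff.support, v ≠ v' ∧ f v = f v' := by
  classical
  by_contra! hinj
  have hsupport := Finsupp.mapDomain_support_of_injOn p.coeff
    fun v hv v' hv' => not_imp_not.1 (hinj v hv v' hv')
  rw [← coeff_mapDomain, h, coeff_zero, Finsupp.support_zero, eq_comm, Finset.image_eq_empty,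
    Finsupp.support_eq_empty, coeff_eq_zero] at hsupport
  exact hp hsupport

variable {α : Type*} [DecidableEq α] {w : FreeGroup α}

theorem exists_toWord_eq_of_one_mem_support_of_self_mem_support {a : α}
    (hone : 1 ∈ (foxDeriv a w).coeff.support) (hself : w ∈ (foxDeriv a w).coeff.support) :
    ∃ u : List (α × Bool), w.toWord = (a, true) :: (u ++ [(a, false)]) := by
  rw [← w.mk_toWord] at hone hself
  have hhead := prefix_of_mem_support_foxDeriv_mk w.isReduced_toWord hone
  have hlast := prefix_of_mem_support_foxDeriv_mk w.isReduced_toWord hself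
  rw [mk_toWord] at hlast
  obtain ⟨t, ht⟩ : [(a, true)] <+: w.toWord := by simpa using hhead
  obtain ⟨u, hu⟩ : [(a, false)] <:+ w.toWord :=
    hlast.elim (fun h => absurd h.length_le (by simp)) And.right
  cases u with
  | nil => simp [← hu] at ht
  | cons s u =>
    obtain rfl : (a, true) = s := (List.cons.inj (ht.trans hu.symm)).1
    exact ⟨u, hu.symm⟩

variable {G : Type*} [Group G] {f : FreeGroup α →* G}

theorem exists_norm_lt_of_map_eq_of_mem_support_foxDeriv {a : α} {v v' : FreeGroup α}
    (hw : w ≠ 1) (hfw : f w = 1)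
    (hv : v ∈ (foxDeriv a w).coeff.support) (hv' : v' ∈ (foxDeriv a w).coeff.support)
    (hne : v ≠ v') (hf : f v = f v') :
    ∃ u : FreeGroup α, u.norm < w.norm ∧ u ≠ 1 ∧ f u = 1 := by
  have isPrefix_toWord {v : FreeGroup α} (hv : v ∈ (foxDeriv a w).coeff.support) :
      v.toWord <+: w.toWord :=
    (prefix_of_mem_support_foxDeriv_mk w.isReduced_toWord (w.mk_toWord.symm ▸ hv)).elim
      (List.prefix_append _ _).trans And.left
  wlog hle : v.toWord.length ≤ v'.toWord.length generalizing v v'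
  · exact this hv' hv hne.symm hf.symm (le_of_not_ge hle)
  obtain ⟨m, hm⟩ :=
    List.prefix_of_prefix_length_le (isPrefix_toWord hv) (isPrefix_toWord hv') hle
  have hmk : v' = v * mk m := by rw [← v'.mk_toWord, ← hm, ← mul_mk, mk_toWord]
  have hlength : v.toWord.length + m.length ≤ w.norm := by
    simpa [← hm, FreeGroup.norm] using (isPrefix_toWord hv').length_le
  by_cases hshort : m.length < w.norm
  · refine ⟨mk m, norm_mk_le.trans_lt hshort, fun h => hne ?_, ?_⟩
    · rw [hmk, h, mul_one]
    · simpa [hmk] using hf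
  -- Otherwise `v = 1` and `v' = w`: `w` begins with `a` and ends with `a⁻¹`, so a conjugate is
  -- shorter.
  obtain rfl : v = 1 := toWord_eq_nil_iff.1 (List.eq_nil_of_length_eq_zero (by lia))
  obtain rfl : v' = w := toWord_injective <| (isPrefix_toWord hv').eq_of_length <| by
    simp only [← hm, List.length_append]
    exact hlength.antisymm (by lia)
  obtain ⟨u, hu⟩ := exists_toWord_eq_of_one_mem_support_of_self_mem_support hv hv'
  have hconj : v' = of a * mk u * (of a)⁻¹ := by
    rw [← v'.mk_toWord, hu]
    rfl
  refine ⟨mk u, norm_mk_le.trans_lt ?_, ?_, ?_⟩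
  · simp [FreeGroup.norm, hu]
  · intro h
    simp [hconj, h] at hw
  · simpa [hconj] using hfw

theorem injective_of_forall_mapDomain_foxDeriv_eq_zero
    (h : ∀ w : FreeGroup α, f w = 1 → ∀ a, mapDomainRingHom ℤ f (foxDeriv a w) = 0) :
    Function.Injective f := by
  rw [injective_iff_map_eq_one]
  intro w
  induction hn : w.norm using Nat.strong_induction_on generalizing w with
  | _ n ih =>
  subst hn
  intro hfw
  by_contra hw
  obtain ⟨a, ha⟩ := exists_foxDeriv_ne_zero hw
  obtain ⟨v, hv, v', hv', hne, hf⟩ := exists_ne_map_eq_of_mapDomain_eq_zero ha (h w hfw a)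
  obtain ⟨u, hlt, hu, hfu⟩ := exists_norm_lt_of_map_eq_of_mem_support_foxDeriv hw hfw hv hv' hne hf
  exact hu (ih _ hlt u rfl hfu)

end Injectivity

section Counting

variable {β : Type*} [DecidableEq β] {f : FreeGroup Bool →* FreeGroup β} {b : β}

theorem foxDeriv_map_of_foxDeriv_eq_zero (hzero : foxDeriv b (f (of true)) = 0)
    (w : FreeGroup Bool) : foxDeriv b (f w) =
      mapDomainRingHom ℤ f (foxDeriv false w) * foxDeriv b (f (of false)) := by
  rw [foxDeriv_map, Fintype.sum_bool, hzero, mul_zero, zero_add]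

theorem injective_of_foxDeriv_eq_zero (hne_one : f (of true) ≠ 1)
    (hzero : foxDeriv b (f (of true)) = 0) (hne : foxDeriv b (f (of false)) ≠ 0) :
    Function.Injective f := by
  obtain ⟨c, hc⟩ := exists_foxDeriv_ne_zero hne_one
  refine injective_of_forall_mapDomain_foxDeriv_eq_zero fun w hw => ?_
  have hfalse : mapDomainRingHom ℤ f (foxDeriv false w) = 0 := by
    have hchain := foxDeriv_map_of_foxDeriv_eq_zero hzero w
    rw [hw, foxDeriv_one, eq_comm] at hchain
    exact (mul_eq_zero.1 hchain).resolve_right hne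
  have htrue : mapDomainRingHom ℤ f (foxDeriv true w) = 0 := by
    have hchain := foxDeriv_map f c w
    rw [hw, foxDeriv_one, Fintype.sum_bool, hfalse, zero_mul, add_zero, eq_comm] at hchain
    exact (mul_eq_zero.1 hchain).resolve_right hc
  rintro (_ | _)
  exacts [hfalse, htrue]

theorem countP_toWord_eq_one_of_foxDeriv_map_eq_single (hne_one : f (of true) ≠ 1)
    (hzero : foxDeriv b (f (of true)) = 0) {w : FreeGroup Bool} {g : FreeGroup β} {r : ℤ}
    (hr : r ≠ 0) (hw : foxDeriv b (f w) = single g r) :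
    w.toWord.countP (·.1 = false) = 1 := by
  rw [foxDeriv_map_of_foxDeriv_eq_zero hzero] at hw
  have hne : foxDeriv b (f (of false)) ≠ 0 := by
    intro h
    rw [h, mul_zero, eq_comm, single_eq_zero] at hw
    exact hr hw
  have hf := injective_of_foxDeriv_eq_zero hne_one hzero hne
  have hcard := card_support_eq_one_of_mul_eq_single hr hw
  rwa [mapDomainRingHom_apply, coeff_mapDomain, Finsupp.mapDomain_support_of_injective hf,
    Finset.card_image_of_injective _ hf, ← w.mk_toWord,
    card_support_foxDeriv_mk _ w.isReduced_toWord] at hcard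

end Counting

section DerivedOperation

/-- The binary operation `a • b = w(a, b)` on a group obtained by substituting `a` for the generator
`false` and `b` for the generator `true` in `w`. -/
def derivedOp {G : Type*} [Group G] (w : FreeGroup Bool) (a b : G) : G :=
  lift (fun t => bif t then b else a) w

theorem lift_eq_derivedOp {G : Type*} [Group G] (g : Bool → G) (w : FreeGroup Bool) :
    lift g w = derivedOp w (g false) (g true) := by
  rw [derivedOp]
  congr 2 with t
  cases t <;> rfl

theorem exists_op_eq_of_foldl_eq {M : Type*} [One M] {op : M → M → M} (hop : ∀ a, op a 1 = a)
    {l : List M} {z : M} (hz : z ≠ 1) (hl : l.foldl op 1 = z) :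
    ∃ u, ∃ g ∈ l, g ≠ 1 ∧ op u g = z := by
  induction l using List.reverseRecOn with
  | nil => exact absurd hl.symm hz
  | append_singleton l g ih =>
    rw [List.foldl_concat] at hl
    by_cases hg : g = 1
    · rw [hg, hop] at hl
      obtain ⟨u, g', hg', h⟩ := ih hl
      exact ⟨u, g', List.mem_append_left _ hg', h⟩
    · exact ⟨_, g, by simp, hg, hl⟩

theorem inv_lift_inv_of_mk {α : Type*} (l : List (α × Bool)) :
    (lift (fun a => (of a)⁻¹) (mk l))⁻¹ = mk l.reverse := by
  induction l with
  | nil => simp [← one_eq_mk]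
  | cons s l ih =>
    have hsingleton : (lift (fun a => (of a)⁻¹) (mk [s]))⁻¹ = mk [s] := by
      obtain ⟨a, _ | _⟩ := s <;> simp [lift_mk, of, inv_mk, invRev]
    rw [List.reverse_cons, ← mul_mk, ← ih, ← List.singleton_append, ← mul_mk, map_mul, mul_inv_rev,
      hsingleton]

variable {w : FreeGroup Bool}

theorem map_not_toWord_eq_reverse
    (hinv : ∀ a b : FreeGroup Bool, (derivedOp w a b)⁻¹ = derivedOp w b⁻¹ a⁻¹) :
    w.toWord.map (fun s => (!s.1, s.2)) = w.toWord.reverse := by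
  have hmk : mk (w.toWord.map fun s => (!s.1, s.2)) = mk w.toWord.reverse := by
    rw [← inv_lift_inv_of_mk, ← map.mk, mk_toWord, map_eq_lift, lift_eq_derivedOp,
      lift_eq_derivedOp, hinv, inv_inv, inv_inv]
    rfl
  have hmap : FreeGroup.IsReduced (w.toWord.map fun s => (!s.1, s.2)) := by
    simpa [FreeGroup.IsReduced, List.isChain_map] using w.isReduced_toWord
  have hreverse : FreeGroup.IsReduced w.toWord.reverse := by
    simpa [FreeGroup.IsReduced, List.isChain_reverse, eq_comm] using w.isReduced_toWord
  rw [← hmap.reduce_eq, ← hreverse.reduce_eq, ← toWord_mk, ← toWord_mk, hmk]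

theorem eq_pair_of_map_not_eq_reverse {l : List (Bool × Bool)}
    (hl : l.map (fun s => (!s.1, s.2)) = l.reverse) (hcount : l.countP (·.1 = false) = 1) :
    ∃ c e, l = [(c, e), (!c, e)] := by
  have hcount_not : l.countP (¬ ·.1 = false) = 1 := by
    rw [← hcount, ← l.countP_reverse, ← hl, List.countP_map]
    congr 1 with s
    simp
  have hlength : l.length = 2 := by
    have hsplit := l.length_eq_countP_add_countP (·.1 = false)
    simp only [decide_not, decide_eq_true_eq] at hsplit hcount_not
    lia
  obtain ⟨⟨c, e⟩, ⟨d, e'⟩, rfl⟩ := List.length_eq_two.1 hlength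
  obtain ⟨⟨rfl, rfl⟩, -⟩ : (d = !c ∧ e' = e) ∧ _ := by simpa [eq_comm] using hl
  exact ⟨c, e', rfl⟩

theorem eq_mul_of_toWord_eq_pair {c e : Bool} (h1 : derivedOp w (of false) 1 = of false)
    (hw : w.toWord = [(c, e), (!c, e)]) :
    w = of false * of true ∨ w = of true * of false := by
  obtain rfl : mk [(c, e), (!c, e)] = w := by rw [← hw, mk_toWord]
  revert c e
  decide

theorem countP_toWord_eq_one_of_derivedOp_eq {c : Bool} {n : ℤ} {u : FreeGroup Bool}
    (hne_one : of c ^ n ≠ 1) (hu : derivedOp w u (of c ^ n) = of false * of true) :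
    w.toWord.countP (·.1 = false) = 1 := by
  let f : FreeGroup Bool →* FreeGroup Bool := lift fun t => bif t then of c ^ n else u
  have hf : f (of true) = of c ^ n := lift_apply_of
  have hzero : foxDeriv (!c) (f (of true)) = 0 := by
    rw [hf, foxDeriv_of_zpow_of_ne (by simp)]
  obtain ⟨g, hg⟩ : ∃ g, foxDeriv (!c) (f w) = single g 1 := by
    change ∃ g, foxDeriv (!c) (derivedOp w u (of c ^ n)) = _
    rw [hu, foxDeriv_mul, foxDeriv_of, foxDeriv_of]
    cases c
    · exact ⟨of false, by simp⟩
    · exact ⟨1, by simp [one_def]⟩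
  exact countP_toWord_eq_one_of_foxDeriv_map_eq_single (hf ▸ hne_one) hzero one_ne_zero hg

theorem derived_group_operation_is_mul_or_swap_mul_general (w : FreeGroup Bool)
    (h1 : ∀ a : FreeGroup Bool, derivedOp w a 1 = a)
    (hinv : ∀ a b : FreeGroup Bool, (derivedOp w a b)⁻¹ = derivedOp w b⁻¹ a⁻¹)
    {l : List (FreeGroup Bool)} (hl : ∀ g ∈ l, ∃ c, ∃ n : ℤ, g = of c ^ n)
    (hfold : l.foldl (derivedOp w) 1 = of false * of true) :
    w = of false * of true ∨ w = of true * of false := by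
  have hxy : (of false * of true : FreeGroup Bool) ≠ 1 := by decide
  obtain ⟨u, g, hg, hg_one, hu⟩ := exists_op_eq_of_foldl_eq h1 hxy hfold
  obtain ⟨c, n, rfl⟩ := hl g hg
  obtain ⟨d, e, hw⟩ := eq_pair_of_map_not_eq_reverse (map_not_toWord_eq_reverse hinv)
    (countP_toWord_eq_one_of_derivedOp_eq hg_one hu)
  exact eq_mul_of_toWord_eq_pair (h1 _) hw

theorem exists_eq_of_zpow_of_mem_flatten {α : Type*} {k : ℕ} {i j : Fin k → ℤ} {a b : α} :
    ∀ g ∈ (List.ofFn fun m : Fin k => [of a ^ i m, of b ^ j m]).flatten,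
      ∃ c, ∃ n : ℤ, g = of c ^ n := by
  rw [List.forall_mem_flatten, List.forall_mem_ofFn_iff]
  exact fun m => List.forall_mem_cons.2 ⟨⟨a, i m, rfl⟩, List.forall_mem_singleton.2 ⟨b, j m, rfl⟩⟩

end DerivedOperation

end FoxCalculus

/-- In the free group `F` on two generators `x, y` (here `x = of false`,
`y = of true` in `FreeGroup Bool`), let `w = x^{i₁} y^{j₁} ⋯ x^{i_k} y^{j_k}` be a
word and let `a • b := w(a,b)` be the derived binary operation (substitution).
If `a • 1 = a`, `1 • b = b`, `(a • b)⁻¹ = b⁻¹ • a⁻¹`, and the old product is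
recovered by substituting it into `w` expressed via `•`
(`a^{i₁} • b^{j₁} • ⋯ • a^{i_k} • b^{j_k} = a b`), then `w = xy` or `w = yx`. -/
theorem derived_group_operation_is_mul_or_swap_mul
    (w : FreeGroup Bool) (k : ℕ) (i j : Fin k → ℤ)
    (hw : w = (List.ofFn fun m : Fin k =>
      (FreeGroup.of false) ^ (i m) * (FreeGroup.of true) ^ (j m)).prod)
    (op : FreeGroup Bool → FreeGroup Bool → FreeGroup Bool)
    (hop : ∀ a b : FreeGroup Bool,
      op a b = FreeGroup.lift (fun t : Bool => bif t then b else a) w)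
    (h1 : ∀ a : FreeGroup Bool, op a 1 = a)
    (h2 : ∀ b : FreeGroup Bool, op 1 b = b)
    (hinv : ∀ a b : FreeGroup Bool, (op a b)⁻¹ = op b⁻¹ a⁻¹)
    (hsub : ∀ a b : FreeGroup Bool,
      ((List.ofFn fun m : Fin k => [a ^ (i m), b ^ (j m)]).flatten).foldl op 1 = a * b) :
    w = FreeGroup.of false * FreeGroup.of true ∨
      w = FreeGroup.of true * FreeGroup.of false := by
  obtain rfl : op = derivedOp w := funext₂ hop
  exact derived_group_operation_is_mul_or_swap_mul_general w h1 hinv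
    exists_eq_of_zpow_of_mem_flatten (hsub _ _)
end
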